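/- Let A and B be complex unital Banach algebras with B commutative, and let T : A → B be a unital, linear, bijective map satisfying ρ_B(T(a)) = ρ_A(a) for every a ∈ A. Then σ_B(T(a)) = σ_A(a) for all a ∈ A. -/

import Mathlib

open Set

section Milman

variable {E : Type*} [AddCommGroup E] [Module ℝ E] [TopologicalSpace E]
  [IsTopologicalAddGroup E] [ContinuousSMul ℝ E]

theorem IsCompact.convexHull_union_of_convex {s t : Set E} (hs : IsCompact s) (ht : IsCompact t)
    (hsc : Convex ℝ s) (htc : Convex ℝ t) : IsCompact (convexHull ℝ (s ∪ t)) := by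
  rcases s.eq_empty_or_nonempty with rfl | hs'
  · simpa [htc.convexHull_eq] using ht
  rcases t.eq_empty_or_nonempty with rfl | ht'
  · simpa [hsc.convexHull_eq] using hs
  rw [hsc.convexHull_union htc hs' ht']
  have h : convexJoin ℝ s t =
      (fun p : (E × E) × ℝ => p.1.1 + p.2 • (p.1.2 - p.1.1)) '' ((s ×ˢ t) ×ˢ Icc (0 : ℝ) 1) := by
    ext x
    simp only [mem_convexJoin, segment_eq_image', mem_image, mem_prod, Prod.exists]
    grind
  rw [h]
  exact ((hs.prod ht).prod isCompact_Icc).image (by fun_prop)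

/-- **Milman's theorem**: if a compact convex set is contained in the closed convex hull of a
compact subset, then that subset contains all its extreme points. -/
theorem extremePoints_subset_of_subset_closure_convexHull [T2Space E] [LocallyConvexSpace ℝ E]
    {K S : Set E} (hK : IsCompact K) (hKc : Convex ℝ K) (hS : IsCompact S) (hSK : S ⊆ K)
    (h : K ⊆ closure (convexHull ℝ S)) : K.extremePoints ℝ ⊆ S := by
  intro f hf
  by_contra hfS
  have hfK := (hKc.mem_extremePoints_iff_mem_sdiff_convexHull_sdiff.1 hf).2
  obtain ⟨C, hC, hCc, hCK, hfC, hSC⟩ : ∃ C : Set E, IsCompact C ∧ Convex ℝ C ∧ C ⊆ K ∧ f ∉ C ∧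
      K ∩ S ⊆ C := by
    refine hS.induction_on (p := fun s => ∃ C : Set E, IsCompact C ∧ Convex ℝ C ∧ C ⊆ K ∧ f ∉ C ∧
      K ∩ s ⊆ C) ⟨∅, isCompact_empty, convex_empty, empty_subset _, by simp, by simp⟩ ?_ ?_ ?_
    · rintro s t hst ⟨C, hC, hCc, hCK, hfC, htC⟩
      exact ⟨C, hC, hCc, hCK, hfC, (inter_subset_inter_right K hst).trans htC⟩
    · rintro s t ⟨C, hC, hCc, hCK, hfC, hsC⟩ ⟨D, hD, hDc, hDK, hfD, htD⟩
      refine ⟨convexHull ℝ (C ∪ D), hC.convexHull_union_of_convex hD hCc hDc,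
        convex_convexHull _ _, convexHull_min (union_subset hCK hDK) hKc, fun hfCD => hfK ?_, ?_⟩
      · refine convexHull_mono ?_ hfCD
        rintro x (hx | hx)
        · exact ⟨hCK hx, fun hxf => hfC (hxf ▸ hx)⟩
        · exact ⟨hDK hx, fun hxf => hfD (hxf ▸ hx)⟩
      · rw [inter_union_distrib_left]
        exact (union_subset_union hsC htD).trans (subset_convexHull _ _)
    · intro x hx
      obtain ⟨l, hl⟩ := geometric_hahn_banach_point_point (E := E) (x := f) (y := x)
        (fun hfx => hfS (hfx ▸ hx))
      obtain ⟨c, hfc, hcx⟩ := exists_between hl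
      refine ⟨{y | c < l y}, mem_nhdsWithin_of_mem_nhds
        ((isOpen_lt continuous_const l.continuous).mem_nhds hcx), K ∩ {y | c ≤ l y},
        hK.inter_right (isClosed_le continuous_const l.continuous),
        hKc.inter (convex_halfSpace_ge l.toLinearMap.isLinear c), inter_subset_left,
        fun hf' => hfc.not_ge hf'.2, inter_subset_inter_right K fun y hy => mem_ofPred.2 (le_of_lt hy)⟩
  have hKC : K ⊆ C := h.trans <| closure_minimal
    (convexHull_min (fun x hx => hSC ⟨hSK hx, hx⟩) hCc) hC.isClosed
  exact hfC (hKC hf.1)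

end Milman

section States

/-- The space of linear functionals on `A` with the topology of pointwise convergence. -/
abbrev PointwiseDual (A : Type*) [AddCommGroup A] [Module ℂ A] : Type _ :=
  WeakBilin (LinearMap.id : Module.Dual ℂ A →ₗ[ℂ] Module.Dual ℂ A)

namespace PointwiseDual

variable {A : Type*} [AddCommGroup A] [Module ℂ A]

instance : FunLike (PointwiseDual A) A ℂ := inferInstanceAs (FunLike (Module.Dual ℂ A) A ℂ)

instance : LinearMapClass (PointwiseDual A) ℂ A ℂ :=
  inferInstanceAs (LinearMapClass (Module.Dual ℂ A) ℂ A ℂ)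

theorem combo_apply (s t : ℝ) (f g : PointwiseDual A) (a : A) :
    (s • f + t • g) a = s • f a + t • g a :=
  rfl

theorem isEmbedding_coe : Topology.IsEmbedding fun (f : PointwiseDual A) (a : A) => f a :=
  WeakBilin.isEmbedding fun _ _ h => h

instance : T2Space (PointwiseDual A) := isEmbedding_coe.t2Space

instance : ContinuousSMul ℝ (PointwiseDual A) := IsScalarTower.continuousSMul ℂ

theorem continuous_apply (a : A) : Continuous fun f : PointwiseDual A => f a :=
  WeakBilin.eval_continuous _ a

end PointwiseDual

variable {A : Type*} [Ring A] [Algebra ℂ A]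

/-- The linear functionals that are normalised at `1` and dominated by `p`. -/
def dominatedStates (p : A → ℝ) : Set (PointwiseDual A) :=
  {f | f 1 = 1 ∧ ∀ a, ‖f a‖ ≤ p a}

theorem convex_dominatedStates (p : A → ℝ) : Convex ℝ (dominatedStates p) := by
  rintro f ⟨hf1, hf⟩ g ⟨hg1, hg⟩ s t hs ht hst
  refine ⟨?_, fun a => ?_⟩
  · simp [PointwiseDual.combo_apply, hf1, hg1, ← Complex.ofReal_add, hst]
  · calc ‖(s • f + t • g) a‖ ≤ ‖s • f a‖ + ‖t • g a‖ := norm_add_le _ _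
      _ = s * ‖f a‖ + t * ‖g a‖ := by rw [norm_smul_of_nonneg hs, norm_smul_of_nonneg ht]
      _ ≤ s * p a + t * p a := by gcongr; exacts [hf a, hg a]
      _ = p a := by rw [← add_mul, hst, one_mul]

theorem isCompact_dominatedStates (p : A → ℝ) : IsCompact (dominatedStates p) := by
  rw [PointwiseDual.isEmbedding_coe.isCompact_iff]
  have h : (fun (f : PointwiseDual A) (a : A) => f a) '' dominatedStates p =
      (univ.pi fun a => Metric.closedBall (0 : ℂ) (p a)) ∩
      ({g | g 1 = 1} ∩ ({g | ∀ a b, g (a + b) = g a + g b} ∩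
        {g | ∀ (c : ℂ) a, g (c • a) = c * g a})) := by
    ext g
    constructor
    · rintro ⟨f, ⟨hf1, hf⟩, rfl⟩
      exact ⟨fun a _ => by simpa using hf a, hf1, map_add f, map_smul f⟩
    · rintro ⟨hg, hg1, hadd, hsmul⟩
      exact ⟨({ toFun := g, map_add' := hadd, map_smul' := hsmul } : Module.Dual ℂ A),
        ⟨hg1, fun a => by simpa using! hg a trivial⟩, rfl⟩
  rw [h]
  refine (isCompact_univ_pi fun a => isCompact_closedBall _ _).inter_right ?_
  refine (isClosed_eq (by fun_prop) (by fun_prop)).inter (IsClosed.inter ?_ ?_)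
  · simp only [ofPred_forall]
    exact isClosed_iInter fun a => isClosed_iInter fun b => isClosed_eq (by fun_prop) (by fun_prop)
  · simp only [ofPred_forall]
    exact isClosed_iInter fun a => isClosed_iInter fun b => isClosed_eq (by fun_prop) (by fun_prop)

/-- Dominated states vanish at every point where all extreme dominated states vanish. -/
theorem eq_zero_of_forall_extremePoints_dominatedStates {p : A → ℝ} {x : A}
    (hx : ∀ f ∈ (dominatedStates p).extremePoints ℝ, f x = 0) {f : PointwiseDual A}
    (hf : f ∈ dominatedStates p) : f x = 0 := by
  rw [← closure_convexHull_extremePoints (isCompact_dominatedStates p)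
    (convex_dominatedStates p)] at hf
  have hmin : closure (convexHull ℝ ((dominatedStates p).extremePoints ℝ)) ⊆ {g | g x = 0} := by
    refine closure_minimal (convexHull_min hx ?_)
      (isClosed_eq (PointwiseDual.continuous_apply x) continuous_const)
    intro g (hg : g x = 0) h (hh : h x = 0) s t _ _ _
    simp [PointwiseDual.combo_apply, hg, hh]
  exact hmin hf

theorem exists_character_lt_re_of_mem_dominatedStates {p : A → ℝ}
    (hp : ∀ a, ∃ χ : A →ₐ[ℂ] ℂ, ‖χ a‖ = p a) (hle : ∀ (χ : A →ₐ[ℂ] ℂ) a, ‖χ a‖ ≤ p a)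
    {f : PointwiseDual A} (hf : f ∈ dominatedStates p) (a : A) {c : ℝ} (hc : c < (f a).re) :
    ∃ χ : A →ₐ[ℂ] ℂ, c < (χ a).re := by
  by_contra! hχ
  have hfc : 0 < (f a).re - c := by linarith
  obtain ⟨t, ht0, htc⟩ : ∃ t : ℝ, p a ≤ t ∧ p a ^ 2 < 2 * ((f a).re - c) * (t + c) := by
    refine ⟨max (p a) (p a ^ 2 / (2 * ((f a).re - c)) + 1 - c), le_max_left _ _, ?_⟩
    rw [← div_lt_iff₀' (by positivity)]
    linarith [le_max_right (p a) (p a ^ 2 / (2 * ((f a).re - c)) + 1 - c)]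
  obtain ⟨χ, h⟩ := hp (a + algebraMap ℂ A t)
  have h1 := hf.2 (a + algebraMap ℂ A t)
  rw [← h, Algebra.algebraMap_eq_smul_one, map_add, map_add, map_smul, map_smul, hf.1, map_one,
    smul_eq_mul, mul_one] at h1
  have h2 : ‖f a + t‖ ^ 2 ≤ ‖χ a + t‖ ^ 2 := by gcongr
  have h3 := hχ χ
  have h4 : ‖χ a‖ ^ 2 ≤ p a ^ 2 := by gcongr; exact hle χ a
  have h5 : -(χ a).re ≤ p a := (neg_le_abs _).trans ((Complex.abs_re_le_norm _).trans (hle χ a))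
  rw [Complex.sq_norm, Complex.sq_norm, Complex.normSq_apply, Complex.normSq_apply] at h2
  rw [Complex.sq_norm, Complex.normSq_apply] at h4
  simp only [Complex.add_re, Complex.add_im, Complex.ofReal_re, Complex.ofReal_im, add_zero] at h2
  have h6 : ((χ a).re + t) ^ 2 ≤ (c + t) ^ 2 := by gcongr; linarith
  have h7 : (c + t) ^ 2 + 2 * ((f a).re - c) * (t + c) ≤ ((f a).re + t) ^ 2 := by
    nlinarith [sq_nonneg ((f a).re - c)]
  nlinarith [mul_self_nonneg (f a).im, mul_self_nonneg (χ a).re]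

/-- If `p` is the supremum of the moduli of the characters, then every extreme state dominated by
`p` is multiplicative. -/
theorem map_mul_of_mem_extremePoints_dominatedStates {p : A → ℝ}
    (hp : ∀ a, ∃ χ : A →ₐ[ℂ] ℂ, ‖χ a‖ = p a) (hle : ∀ (χ : A →ₐ[ℂ] ℂ) a, ‖χ a‖ ≤ p a)
    {f : PointwiseDual A} (hf : f ∈ (dominatedStates p).extremePoints ℝ) (a b : A) :
    f (a * b) = f a * f b := by
  let S : Set (PointwiseDual A) := dominatedStates p ∩ {g | ∀ a b : A, g (a * b) = g a * g b}
  have hS : IsCompact S := by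
    refine (isCompact_dominatedStates p).inter_right ?_
    simp only [ofPred_forall]
    exact isClosed_iInter fun a => isClosed_iInter fun b =>
      isClosed_eq (PointwiseDual.continuous_apply _)
        ((PointwiseDual.continuous_apply _).mul (PointwiseDual.continuous_apply _))
  have hχS (χ : A →ₐ[ℂ] ℂ) : χ.toLinearMap ∈ S := ⟨⟨map_one χ, hle χ⟩, map_mul χ⟩
  have hcl : dominatedStates p ⊆ closure (convexHull ℝ S) := by
    intro g hg
    by_contra hgS
    obtain ⟨l, u, hl, hu⟩ := RCLike.geometric_hahn_banach_closed_point (𝕜 := ℂ)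
      (convex_convexHull ℝ S).closure isClosed_closure hgS
    obtain ⟨x, rfl⟩ := LinearMap.dualEmbedding_surjective _ l
    obtain ⟨χ, hχ⟩ := exists_character_lt_re_of_mem_dominatedStates hp hle hg x hu
    exact (hl _ (subset_closure (subset_convexHull ℝ S (hχS χ)))).not_gt hχ
  exact (extremePoints_subset_of_subset_closure_convexHull (isCompact_dominatedStates p)
    (convex_dominatedStates p) hS inter_subset_left hcl hf).2 a b

end States

section SpectralRadius

variable {A : Type*} [NormedRing A] [NormedAlgebra ℂ A] [CompleteSpace A]

/-- The spectral radius as a real number. -/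
noncomputable def realSpectralRadius {A : Type*} [NormedRing A] [NormedAlgebra ℂ A] (a : A) : ℝ :=
  (spectralRadius ℂ a).toReal

theorem realSpectralRadius_nonneg {A : Type*} [NormedRing A] [NormedAlgebra ℂ A] (a : A) :
    0 ≤ realSpectralRadius a :=
  ENNReal.toReal_nonneg

theorem spectralRadius_ne_top (a : A) : spectralRadius ℂ a ≠ ⊤ := by
  refine ne_top_of_le_ne_top (b := (‖a‖₊ * ‖(1 : A)‖₊ : NNReal)) ENNReal.coe_ne_top ?_
  refine iSup₂_le fun k hk => ?_
  exact_mod_cast spectrum.norm_le_norm_mul_of_mem hk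

theorem norm_le_realSpectralRadius {a : A} {k : ℂ} (hk : k ∈ spectrum ℂ a) :
    ‖k‖ ≤ realSpectralRadius a := by
  have h : (‖k‖₊ : ENNReal) ≤ spectralRadius ℂ a := le_iSup₂ (α := ENNReal) k hk
  simpa [realSpectralRadius] using ENNReal.toReal_mono (spectralRadius_ne_top a) h

theorem exists_norm_eq_realSpectralRadius [Nontrivial A] (a : A) :
    ∃ k ∈ spectrum ℂ a, ‖k‖ = realSpectralRadius a := by
  obtain ⟨k, hk, h⟩ := spectrum.exists_nnnorm_eq_spectralRadius a
  exact ⟨k, hk, by simp [realSpectralRadius, ← h]⟩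

theorem realSpectralRadius_le_norm_mul_norm_one [Nontrivial A] (a : A) :
    realSpectralRadius a ≤ ‖a‖ * ‖(1 : A)‖ := by
  obtain ⟨k, hk, h⟩ := exists_norm_eq_realSpectralRadius a
  exact h ▸ spectrum.norm_le_norm_mul_of_mem hk

theorem realSpectralRadius_sq_le [Nontrivial A] (a : A) :
    realSpectralRadius (a ^ 2) ≤ realSpectralRadius a ^ 2 := by
  obtain ⟨k, hk, h⟩ := exists_norm_eq_realSpectralRadius (a ^ 2)
  rw [spectrum.map_pow] at hk
  obtain ⟨l, hl, rfl⟩ := hk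
  rw [← h, norm_pow]
  gcongr
  exact norm_le_realSpectralRadius hl

theorem isUnit_of_realSpectralRadius_sub_one_eq_zero {a : A} (h : realSpectralRadius (a - 1) = 0) :
    IsUnit a := by
  by_contra ha
  have hmem : (-1 : ℂ) ∈ spectrum ℂ (a - 1) := by
    rw [spectrum.mem_iff, map_neg, map_one, show -1 - (a - 1) = -a by abel, IsUnit.neg_iff]
    exact ha
  have := norm_le_realSpectralRadius hmem
  norm_num [h] at this

theorem isUnit_of_isUnit_mul_of_isUnit_mul {M : Type*} [Monoid M] {a b : M} (h₁ : IsUnit (a * b))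
    (h₂ : IsUnit (b * a)) : IsUnit a := by
  obtain ⟨u, hu⟩ := h₁
  obtain ⟨v, hv⟩ := h₂
  refine isUnit_iff_exists_and_exists.2 ⟨⟨b * ↑u⁻¹, ?_⟩, ⟨↑v⁻¹ * b, ?_⟩⟩
  · rw [← mul_assoc, ← hu, u.mul_inv]
  · rw [mul_assoc, ← hv, v.inv_mul]

/-- A continuous functional dominated by the spectral radius is a trace. -/
theorem map_mul_comm_of_norm_le_realSpectralRadius (f : A →L[ℂ] ℂ)
    (hf : ∀ a, ‖f a‖ ≤ realSpectralRadius a) (a x : A) : f (a * x) = f (x * a) := by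
  let F : ℂ → ℂ := fun z => f (NormedSpace.exp (z • a) * x * NormedSpace.exp (z • -a))
  have hF (z : ℂ) : HasDerivAt F (f (NormedSpace.exp (z • a) * a * x * NormedSpace.exp (z • -a) +
      NormedSpace.exp (z • a) * x * (NormedSpace.exp (z • -a) * -a))) z :=
    f.hasFDerivAt.comp_hasDerivAt z
      (((hasDerivAt_exp_smul_const a z).mul_const x).mul (hasDerivAt_exp_smul_const (-a) z))
  have hb : Bornology.IsBounded (range F) := by
    refine (Metric.isBounded_closedBall (x := (0 : ℂ)) (r := realSpectralRadius x)).subset ?_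
    rintro _ ⟨z, rfl⟩
    have hinv (y : A) : NormedSpace.exp y * NormedSpace.exp (-y) = 1 := by
      let : NormedAlgebra ℚ A := NormedAlgebra.restrictScalars ℚ ℂ A
      rw [← NormedSpace.exp_add_of_commute (Commute.refl y).neg_right, add_neg_cancel,
        NormedSpace.exp_zero]
    let u : Aˣ := ⟨NormedSpace.exp (z • a), NormedSpace.exp (-(z • a)), hinv _, by
      simpa using hinv (-(z • a))⟩
    have hu : realSpectralRadius (u * x * ↑u⁻¹) = realSpectralRadius x := by
      simp only [realSpectralRadius, spectralRadius, spectrum.units_conjugate]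
    have := hf (u * x * ↑u⁻¹)
    rw [hu] at this
    simpa [F, u] using this
  have hconst : F = fun _ => F 0 :=
    funext fun z => Differentiable.apply_eq_apply_of_bounded
      (fun z => (hF z).differentiableAt) hb z 0
  have h0 := hF 0
  rw [hconst] at h0
  have := h0.unique (hasDerivAt_const 0 (F 0))
  simp only [zero_smul, NormedSpace.exp_zero, one_mul, mul_one, mul_neg, ← sub_eq_add_neg,
    map_sub] at this
  exact sub_eq_zero.1 this

theorem AlgHom.norm_apply_le_realSpectralRadius (χ : A →ₐ[ℂ] ℂ) (a : A) :
    ‖χ a‖ ≤ realSpectralRadius a :=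
  norm_le_realSpectralRadius (AlgHom.apply_mem_spectrum χ a)

theorem exists_character_norm_eq_realSpectralRadius {B : Type*} [NormedCommRing B]
    [NormedAlgebra ℂ B] [CompleteSpace B] [Nontrivial B] (b : B) :
    ∃ χ : B →ₐ[ℂ] ℂ, ‖χ b‖ = realSpectralRadius b := by
  obtain ⟨k, hk, h⟩ := exists_norm_eq_realSpectralRadius b
  obtain ⟨χ, rfl⟩ := WeakDual.CharacterSpace.mem_spectrum_iff_exists.1 hk
  exact ⟨WeakDual.CharacterSpace.equivAlgHom χ, h⟩

end SpectralRadius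

section Quotient

variable {A : Type*} [NormedRing A] (I : Ideal A) [I.IsTwoSided] [IsClosed (I : Set A)]

/-- The quotient of a normed ring by a closed ideal containing all commutators. -/
noncomputable abbrev Ideal.normedCommRingOfCommutator (h : ∀ a b : A, a * b - b * a ∈ I) :
    NormedCommRing (A ⧸ I) where
  __ := Submodule.Quotient.normedAddCommGroup I
  __ := Ideal.Quotient.ring I
  mul_comm x y := by
    obtain ⟨a, rfl⟩ := Ideal.Quotient.mk_surjective x
    obtain ⟨b, rfl⟩ := Ideal.Quotient.mk_surjective y
    rw [← map_mul, ← map_mul]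
    exact Ideal.Quotient.eq.2 (h a b)
  norm_mul_le x y := by
    have key (ε : ℝ) (hε : 0 < ε) : ‖x * y‖ ≤ (‖x‖ + ε) * (‖y‖ + ε) := by
      obtain ⟨a, rfl, ha⟩ := Submodule.Quotient.norm_mk_lt x hε
      obtain ⟨b, rfl, hb⟩ := Submodule.Quotient.norm_mk_lt y hε
      calc _ ≤ ‖a * b‖ := Submodule.Quotient.norm_mk_le I (a * b)
        _ ≤ ‖a‖ * ‖b‖ := norm_mul_le a b
        _ ≤ _ := by gcongr
    have hlim : Filter.Tendsto (fun ε : ℝ => (‖x‖ + ε) * (‖y‖ + ε)) (nhdsWithin 0 (Ioi 0))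
        (nhds (‖x‖ * ‖y‖)) := by
      have : Continuous fun ε : ℝ => (‖x‖ + ε) * (‖y‖ + ε) := by fun_prop
      simpa using (this.tendsto 0).mono_left nhdsWithin_le_nhds
    exact ge_of_tendsto hlim (Filter.eventually_of_mem self_mem_nhdsWithin key)

/-- If a closed ideal contains all commutators and is contained in the kernel of the spectral
radius, then the characters attain the spectral radius. -/
theorem exists_character_of_commutator_mem [NormedAlgebra ℂ A] [CompleteSpace A] [Nontrivial A]
    (h : ∀ a b : A, a * b - b * a ∈ I) (hI : ∀ a ∈ I, realSpectralRadius a = 0) (a : A) :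
    ∃ χ : A →ₐ[ℂ] ℂ, ‖χ a‖ = realSpectralRadius a := by
  let := I.normedCommRingOfCommutator h
  let : NormedAlgebra ℂ (A ⧸ I) :=
    { Submodule.Quotient.normedSpace I ℂ, Ideal.Quotient.algebra ℂ with }
  have : CompleteSpace (A ⧸ I) := Submodule.Quotient.completeSpace I
  obtain ⟨k, hk, hka⟩ := exists_norm_eq_realSpectralRadius a
  have hk' : k ∈ spectrum ℂ (Ideal.Quotient.mkₐ ℂ I a) := by
    intro hu
    refine hk ?_
    obtain ⟨y, hy⟩ := hu.exists_right_inv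
    obtain ⟨b, rfl⟩ := Ideal.Quotient.mk_surjective y
    have hy' := hy
    rw [mul_comm] at hy'
    refine isUnit_of_isUnit_mul_of_isUnit_mul (b := b)
      (isUnit_of_realSpectralRadius_sub_one_eq_zero (hI _ (Ideal.Quotient.eq.1 ?_)))
      (isUnit_of_realSpectralRadius_sub_one_eq_zero (hI _ (Ideal.Quotient.eq.1 ?_)))
    · rw [map_mul, map_one, ← hy]; rfl
    · rw [map_mul, map_one, ← hy']; rfl
  obtain ⟨χ, hχ⟩ := WeakDual.CharacterSpace.mem_spectrum_iff_exists.1 hk'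
  exact ⟨(WeakDual.CharacterSpace.equivAlgHom χ).comp (Ideal.Quotient.mkₐ ℂ I), by
    rw [← hka, ← hχ]; rfl⟩

end Quotient

section SpectralIsometry

variable {A B : Type*} [NormedRing A] [NormedAlgebra ℂ A] [CompleteSpace A]
  [NormedCommRing B] [NormedAlgebra ℂ B] [CompleteSpace B] [Nontrivial B]

theorem realSpectralRadius_add_le (x y : B) :
    realSpectralRadius (x + y) ≤ realSpectralRadius x + realSpectralRadius y := by
  obtain ⟨χ, h⟩ := exists_character_norm_eq_realSpectralRadius (x + y)
  rw [← h, map_add]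
  exact (norm_add_le _ _).trans
    (add_le_add (χ.norm_apply_le_realSpectralRadius x) (χ.norm_apply_le_realSpectralRadius y))

theorem realSpectralRadius_smul_le (c : ℂ) (x : B) :
    realSpectralRadius (c • x) ≤ ‖c‖ * realSpectralRadius x := by
  obtain ⟨χ, h⟩ := exists_character_norm_eq_realSpectralRadius (c • x)
  rw [← h, map_smul, norm_smul]
  gcongr
  exact χ.norm_apply_le_realSpectralRadius x

variable (B) in
/-- The spectral radius of a commutative Banach algebra, as a seminorm. -/
noncomputable def spectralSeminorm : Seminorm ℂ B :=
  Seminorm.ofSMulLE realSpectralRadius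
    (le_antisymm (by simpa using realSpectralRadius_smul_le (0 : ℂ) (0 : B))
      (realSpectralRadius_nonneg _))
    realSpectralRadius_add_le realSpectralRadius_smul_le

theorem spectralSeminorm_apply (x : B) : spectralSeminorm B x = realSpectralRadius x := rfl

/-- If the spectral radius is a seminorm vanishing on commutators, then its kernel is a left
ideal. -/
theorem Seminorm.apply_mul_eq_zero_of_eq_realSpectralRadius [Nontrivial A] (q : Seminorm ℂ A)
    (hq : ∀ a, q a = realSpectralRadius a) (hcomm : ∀ a b, q (a * b - b * a) = 0)
    {a b : A} (hb : q b = 0) : q (a * b) = 0 := by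
  have hsq (x : A) : q (x ^ 2) ≤ q x ^ 2 := by
    simpa only [hq] using realSpectralRadius_sq_le x
  have hmul (y : A) (hy : q y = 0) : 4 * q (a * y) ≤ 2 * q a ^ 2 := by
    have hadd : q (a + y) ≤ q a := by simpa [hy] using map_add_le_add q a y
    have hsub : q (a - y) ≤ q a := by simpa [hy] using map_sub_le_add q a y
    have h4 : (4 : ℂ) • (a * y) =
        ((a + y) ^ 2 - (a - y) ^ 2) + (2 : ℂ) • (a * y - y * a) := by
      simp only [sq, add_mul, mul_add, sub_mul, mul_sub, ofNat_smul_eq_nsmul]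
      abel
    calc 4 * q (a * y) = q ((4 : ℂ) • (a * y)) := by simp [map_smul_eq_mul]
      _ ≤ q ((a + y) ^ 2 - (a - y) ^ 2) + q ((2 : ℂ) • (a * y - y * a)) := by
        rw [h4]; exact map_add_le_add _ _ _
      _ ≤ q ((a + y) ^ 2) + q ((a - y) ^ 2) := by
        rw [map_smul_eq_mul, hcomm, mul_zero, add_zero]; exact map_sub_le_add _ _ _
      _ ≤ q a ^ 2 + q a ^ 2 :=
        add_le_add ((hsq _).trans (by gcongr)) ((hsq _).trans (by gcongr))
      _ = 2 * q a ^ 2 := by ring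
  by_contra hne
  have hpos : 0 < q (a * b) := (apply_nonneg q _).lt_of_ne' hne
  obtain ⟨n, hn⟩ := exists_nat_gt (2 * q a ^ 2 / (4 * q (a * b)))
  have := hmul ((n : ℂ) • b) (by rw [map_smul_eq_mul, hb, mul_zero])
  rw [mul_smul_comm, map_smul_eq_mul, Complex.norm_natCast] at this
  rw [div_lt_iff₀ (by positivity)] at hn
  linarith

/-- The characters of a Banach algebra attain the spectral radius if the algebra is linearly
isomorphic to a commutative one by a map preserving the spectral radius. -/
theorem exists_character_of_spectral_isometry [Nontrivial A] (T : A ≃ₗ[ℂ] B)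
    (hT : ∀ a, realSpectralRadius (T a) = realSpectralRadius a) (a : A) :
    ∃ χ : A →ₐ[ℂ] ℂ, ‖χ a‖ = realSpectralRadius a := by
  let q : Seminorm ℂ A := (spectralSeminorm B).comp T.toLinearMap
  have hq (a : A) : q a = realSpectralRadius a := hT a
  have hcomm (a b : A) : q (a * b - b * a) = 0 := by
    obtain ⟨χ, h⟩ := exists_character_norm_eq_realSpectralRadius (T (a * b - b * a))
    have hle (x : A) : ‖χ (T x)‖ ≤ realSpectralRadius x :=
      hT x ▸ χ.norm_apply_le_realSpectralRadius (T x)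
    let f : A →L[ℂ] ℂ := (χ.toLinearMap ∘ₗ T.toLinearMap).mkContinuous ‖(1 : A)‖ fun x =>
      (hle x).trans ((realSpectralRadius_le_norm_mul_norm_one x).trans_eq (mul_comm _ _))
    have hf : f (a * b) = f (b * a) := map_mul_comm_of_norm_le_realSpectralRadius f hle a b
    have hf0 : χ (T (a * b - b * a)) = 0 := by
      rw [map_sub, map_sub]
      exact sub_eq_zero.2 hf
    rw [hq, ← hT, ← h, hf0, norm_zero]
  have hcont : Continuous q := by
    refine Seminorm.continuous_of_le (q := ‖(1 : A)‖₊ • normSeminorm ℂ A)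
      (continuous_norm.const_smul ‖(1 : A)‖₊) fun x => ?_
    exact (hq x).trans_le ((realSpectralRadius_le_norm_mul_norm_one x).trans_eq (mul_comm _ _))
  let I : Ideal A :=
    { carrier := {a | q a = 0}
      zero_mem' := map_zero q
      add_mem' := fun {a b} (ha : q a = 0) (hb : q b = 0) =>
        le_antisymm (by simpa [ha, hb] using map_add_le_add q a b) (apply_nonneg q _)
      smul_mem' := fun a _ hb => q.apply_mul_eq_zero_of_eq_realSpectralRadius hq hcomm hb }
  have hI : I.IsTwoSided := ⟨fun {a} b (ha : q a = 0) => by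
    have hba : q (b * a) = 0 := q.apply_mul_eq_zero_of_eq_realSpectralRadius hq hcomm ha
    refine le_antisymm ?_ (apply_nonneg q _)
    simpa [hba, hcomm] using map_add_le_add q (a * b - b * a) (b * a)⟩
  have hIc : IsClosed (I : Set A) := isClosed_eq hcont continuous_const
  exact exists_character_of_commutator_mem I hcomm (fun a ha => (hq a).symm.trans ha) a

/-- A spectral isometry onto a commutative algebra is multiplicative modulo the radical. -/
theorem realSpectralRadius_map_mul_sub_mul_eq_zero [Nontrivial A] (T : A ≃ₗ[ℂ] B) (hT1 : T 1 = 1)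
    (hT : ∀ a, realSpectralRadius (T a) = realSpectralRadius a) (a b : A) :
    realSpectralRadius (T (a * b) - T a * T b) = 0 := by
  obtain ⟨χ, h⟩ := exists_character_norm_eq_realSpectralRadius (T (a * b) - T a * T b)
  suffices hχ : χ (T (a * b) - T a * T b) = 0 by rw [← h, hχ, norm_zero]
  refine eq_zero_of_forall_extremePoints_dominatedStates (p := realSpectralRadius)
    (f := χ.toLinearMap) (fun f hf => ?_) ⟨map_one χ, χ.norm_apply_le_realSpectralRadius⟩
  let e : PointwiseDual B ≃ₗ[ℝ] PointwiseDual A := T.dualMap.restrictScalars ℝ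
  have he : e '' dominatedStates realSpectralRadius = dominatedStates realSpectralRadius := by
    ext g
    constructor
    · rintro ⟨f, ⟨hf1, hf⟩, rfl⟩
      exact ⟨(congrArg f hT1).trans hf1, fun a => hT a ▸ hf (T a)⟩
    · rintro ⟨hg1, hg⟩
      refine ⟨e.symm g, ⟨?_, fun b => ?_⟩, e.apply_symm_apply g⟩
      · exact (congrArg g (T.symm_apply_eq.2 hT1.symm)).trans hg1
      · simpa [hT] using! (hg (T.symm b)).trans_eq (hT _).symm
  have hef : e f ∈ (dominatedStates (realSpectralRadius (A := A))).extremePoints ℝ := by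
    rw [← he, ← image_extremePoints]
    exact mem_image_of_mem e hf
  have hA : f (T (a * b)) = f (T a) * f (T b) :=
    map_mul_of_mem_extremePoints_dominatedStates (exists_character_of_spectral_isometry T hT)
      AlgHom.norm_apply_le_realSpectralRadius hef a b
  have hB : f (T a * T b) = f (T a) * f (T b) :=
    map_mul_of_mem_extremePoints_dominatedStates exists_character_norm_eq_realSpectralRadius
      AlgHom.norm_apply_le_realSpectralRadius hf (T a) (T b)
  rw [map_sub, hA, hB, sub_self]

end SpectralIsometry

/-- If `A` and `B` are complex unital Banach algebras with `B` commutative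
and `T : A → B` is a unital linear bijection preserving the spectral radius, then `T`
preserves the spectrum. -/
theorem spectral_isometry_onto_commutative_preserves_spectrum
    {A B : Type*} [NormedRing A] [NormedAlgebra ℂ A] [CompleteSpace A]
    [NormedCommRing B] [NormedAlgebra ℂ B] [CompleteSpace B]
    (T : A ≃ₗ[ℂ] B) (hT1 : T 1 = 1)
    (hρ : ∀ a : A, spectralRadius ℂ (T a) = spectralRadius ℂ a) :
    ∀ a : A, spectrum ℂ (T a) = spectrum ℂ a := by
  rcases subsingleton_or_nontrivial A with hA | hA
  · have : Subsingleton B := T.symm.injective.subsingleton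
    simp
  have : Nontrivial B := T.injective.nontrivial
  have hT (a : A) : realSpectralRadius (T a) = realSpectralRadius a := by
    rw [realSpectralRadius, hρ, realSpectralRadius]
  have hmul := realSpectralRadius_map_mul_sub_mul_eq_zero T hT1 hT
  have hunit (a : A) : IsUnit (T a) ↔ IsUnit a := by
    refine ⟨fun h => ?_, fun h => ?_⟩
    · obtain ⟨c, hc⟩ := h.exists_right_inv
      obtain ⟨b, rfl⟩ := T.surjective c
      refine isUnit_of_isUnit_mul_of_isUnit_mul (b := b)
        (isUnit_of_realSpectralRadius_sub_one_eq_zero ?_)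
        (isUnit_of_realSpectralRadius_sub_one_eq_zero ?_)
      · rw [← hT, map_sub, hT1, ← hc, hmul]
      · rw [← hT, map_sub, hT1, ← hc, mul_comm (T a), hmul]
    · obtain ⟨b, hb⟩ := h.exists_right_inv
      have h1 : IsUnit (T a * T b) := by
        refine isUnit_of_realSpectralRadius_sub_one_eq_zero ?_
        have := hmul a b
        rw [hb, hT1] at this
        rwa [← spectralSeminorm_apply, map_sub_rev]
      exact isUnit_of_mul_isUnit_left h1
  intro a
  ext k
  rw [spectrum.mem_iff, spectrum.mem_iff, ← hunit, map_sub, Algebra.algebraMap_eq_smul_one,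
    Algebra.algebraMap_eq_smul_one, map_smul, hT1]
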